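/- Let a > 0 and γ > 0 and let A and L be the Timoshenko coefficient matrices. Then there exist constants C > 0 and c > 0 such that for every ξ ∈ ℝ and every differentiable function û : [0,∞) → ℂ⁴ satisfying û′(t) + iξA û(t) + L û(t) = 0 for all t ≥ 0, one has |û(t)| ≤ C e^{−c η(ξ) t} |û(0)| for all t ≥ 0, where η(ξ) := ξ²/(1 + ξ²)². -/

import Mathlib

open Matrix BigOperators Finset

noncomputable section

/-- Complexification of a real matrix. -/
def cmap {a b : ℕ} (X : Matrix (Fin a) (Fin b) ℝ) : Matrix (Fin a) (Fin b) ℂ :=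
  X.map (fun x => (x : ℂ))

/-- Real part of the standard Hermitian inner product `⟨x, y⟩ = ∑ xᵢ conj yᵢ` on `ℂᵐ`. -/
def reIP {m : ℕ} (x y : Fin m → ℂ) : ℝ := (∑ i, x i * (starRingEnd ℂ) (y i)).re

/-- Symmetric part `X₁ = (X + Xᵀ)/2` of a real square matrix. -/
def symP {m : ℕ} (X : Matrix (Fin m) (Fin m) ℝ) : Matrix (Fin m) (Fin m) ℝ :=
  (2⁻¹ : ℝ) • (X + Xᵀ)

/-- Skew-symmetric part `X₂ = (X − Xᵀ)/2` of a real square matrix. -/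
def skewP {m : ℕ} (X : Matrix (Fin m) (Fin m) ℝ) : Matrix (Fin m) (Fin m) ℝ :=
  (2⁻¹ : ℝ) • (X - Xᵀ)

/-- Kernel of (the complexification of) a real matrix, as a subset of `ℂᵐ`. -/
def kerC {m : ℕ} (L : Matrix (Fin m) (Fin m) ℝ) : Set (Fin m → ℂ) :=
  {z | (cmap L).mulVec z = 0}

/-- Euclidean norm on `ℂᵐ`. -/
def cnrm {m : ℕ} (z : Fin m → ℂ) : ℝ := Real.sqrt (∑ i, Complex.normSq (z i))

/-- Coefficient matrix `A` of the Timoshenko system. -/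
def TimA (a : ℝ) : Matrix (Fin 4) (Fin 4) ℝ :=
  -(!![0, 1, 0, 0; 1, 0, 0, 0; 0, 0, 0, a; 0, 0, a, 0])

/-- Relaxation matrix `L` of the Timoshenko system. -/
def TimL (γ : ℝ) : Matrix (Fin 4) (Fin 4) ℝ :=
  !![0, 0, 0, 1; 0, 0, 0, 0; 0, 0, 0, 0; -1, 0, 0, γ]

/-!
Pairing the equation with `û` only dissipates `Re ⟨L û, û⟩ = γ |ψ_t|²`. Adding a small multiple of
`Re ⟨S û, û⟩`, with `S` symmetric, produces `|L û|²`, and adding a small multiple of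
`-ξ Re ⟨i K û, û⟩`, with `K` skew-symmetric, produces `ξ² |û|²`. The worst error term is
`ξ Re ⟨i S A û, û⟩`: it does not vanish unless `a = 1` and is only bounded by a multiple of
`|ξ| |û| |ψ_t|`. With `p = 1 / (1 + ξ²)`, the weights `δ p` on `S` and `δ κ ξ p²` on `i K` tame it,
because `p |ξ| |û| |ψ_t|` is controlled by `|ψ_t|²` and `(ξ p)² |û|²`. The resulting functional is
equivalent to `|û|²` and decays at the rate `(ξ p)² = ξ² / (1 + ξ²)²`, up to a constant factor; the
extra factor `p` is the loss of regularity caused by `S A`.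
-/

open scoped InnerProductSpace

lemma le_exp_mul_of_hasDerivWithinAt_le {f f' : ℝ → ℝ} {K t : ℝ}
    (hf : ∀ s : ℝ, 0 ≤ s → HasDerivWithinAt f (f' s) (Set.Ici 0) s)
    (hle : ∀ s : ℝ, 0 ≤ s → f' s ≤ K * f s) (ht : 0 ≤ t) :
    f t ≤ f 0 * Real.exp (K * t) := by
  have h := le_gronwallBound_of_liminf_deriv_right_le (δ := f 0) (ε := 0) (b := t)
    (fun s hs => (hf s hs.1).continuousWithinAt.mono Set.Icc_subset_Ici_self)
    (fun s hs r hr =>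
      ((hf s hs.1).mono (Set.Ici_subset_Ici.2 hs.1)).liminf_right_slope_le hr)
    le_rfl (fun s hs => by simpa using hle s hs.1) t ⟨ht, le_rfl⟩
  simpa [gronwallBound_ε0] using h

lemma abs_le_add_of_sq_le_four_mul {x a b : ℝ} (ha : 0 ≤ a) (hb : 0 ≤ b)
    (h : x ^ 2 ≤ 4 * a * b) : |x| ≤ a + b :=
  abs_le_of_sq_le_sq (h.trans (four_mul_le_sq_add a b)) (add_nonneg ha hb)

section Lyapunov

variable {𝕜 E : Type*} [RCLike 𝕜] [NormedAddCommGroup E] [InnerProductSpace 𝕜 E]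

lemma abs_re_inner_apply_le (T : E →L[𝕜] E) (x w : E) :
    |RCLike.re ⟪T x, w⟫_𝕜| ≤ ‖T‖ * ‖x‖ * ‖w‖ :=
  calc |RCLike.re ⟪T x, w⟫_𝕜| ≤ ‖T x‖ * ‖w‖ :=
        (RCLike.abs_re_le_norm _).trans (norm_inner_le_norm _ _)
    _ ≤ ‖T‖ * ‖x‖ * ‖w‖ := by gcongr; exact T.le_opNorm x

lemma abs_re_inner_apply_self_sub_norm_sq_le (H : E →L[𝕜] E) (w : E) :
    |RCLike.re ⟪H w, w⟫_𝕜 - ‖w‖ ^ 2| ≤ ‖H - 1‖ * ‖w‖ ^ 2 := by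
  have h : RCLike.re ⟪H w, w⟫_𝕜 - ‖w‖ ^ 2 = RCLike.re ⟪(H - 1) w, w⟫_𝕜 := by
    simp [inner_sub_left]
  rw [h, sq, ← mul_assoc]
  exact abs_re_inner_apply_le (H - 1) w w

variable [NormedSpace ℝ E] [IsScalarTower ℝ 𝕜 E]

lemma hasDerivWithinAt_re_inner_apply_self {H : E →L[𝕜] E}
    (hH : (H : E →ₗ[𝕜] E).IsSymmetric) {u : ℝ → E} {u' : E} {s : Set ℝ} {t : ℝ}
    (hu : HasDerivWithinAt u u' s t) :
    HasDerivWithinAt (fun t => RCLike.re ⟪H (u t), u t⟫_𝕜)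
      (2 * RCLike.re ⟪H u', u t⟫_𝕜) s t := by
  have hHu : HasDerivWithinAt (fun t => H (u t)) (H u') s t :=
    (H.restrictScalars ℝ).hasFDerivAt.comp_hasDerivWithinAt t hu
  have hre := (RCLike.reCLM (K := 𝕜)).hasFDerivAt.comp_hasDerivWithinAt t (hHu.inner 𝕜 hu)
  refine hre.congr_deriv ?_
  have hsymm : ⟪H (u t), u'⟫_𝕜 = ⟪u t, H u'⟫_𝕜 := hH (u t) u'
  rw [RCLike.reCLM_apply, map_add, hsymm, inner_re_symm (u t) (H u')]
  ring

theorem norm_le_of_lyapunov {H : E →L[𝕜] E} (hH : (H : E →ₗ[𝕜] E).IsSymmetric)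
    {m b k : ℝ} (hm : 0 < m) (hb : 0 < b) (hk : 0 ≤ k)
    (hlower : ∀ w, m * ‖w‖ ^ 2 ≤ RCLike.re ⟪H w, w⟫_𝕜)
    (hupper : ∀ w, RCLike.re ⟪H w, w⟫_𝕜 ≤ b * ‖w‖ ^ 2)
    {u u' : ℝ → E} (hu : ∀ t : ℝ, 0 ≤ t → HasDerivWithinAt u (u' t) (Set.Ici 0) t)
    (hdiss : ∀ t : ℝ, 0 ≤ t → RCLike.re ⟪H (u' t), u t⟫_𝕜 ≤ -k * ‖u t‖ ^ 2)
    {t : ℝ} (ht : 0 ≤ t) :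
    ‖u t‖ ≤ √(b / m) * Real.exp (-(k / b) * t) * ‖u 0‖ := by
  have hgrowth (s : ℝ) (hs : 0 ≤ s) : 2 * RCLike.re ⟪H (u' s), u s⟫_𝕜 ≤
      -(2 * k / b) * RCLike.re ⟪H (u s), u s⟫_𝕜 := by
    have h : 2 * k / b * RCLike.re ⟪H (u s), u s⟫_𝕜 ≤ 2 * k / b * (b * ‖u s‖ ^ 2) := by
      gcongr; exact hupper (u s)
    have hcancel : 2 * k / b * (b * ‖u s‖ ^ 2) = 2 * k * ‖u s‖ ^ 2 := by field_simp
    linarith [hdiss s hs]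
  have hgronwall := le_exp_mul_of_hasDerivWithinAt_le
    (fun s hs => hasDerivWithinAt_re_inner_apply_self hH (hu s hs)) hgrowth ht
  have hexp : Real.exp (-(2 * k / b) * t) = Real.exp (-(k / b) * t) ^ 2 := by
    rw [← Real.exp_nat_mul]; congr 1; push_cast; ring
  refine le_of_sq_le_sq ?_ (by positivity)
  rw [mul_pow, mul_pow, Real.sq_sqrt (by positivity), ← hexp]
  calc ‖u t‖ ^ 2 ≤ RCLike.re ⟪H (u t), u t⟫_𝕜 / m := by
        rw [le_div_iff₀' hm]; exact hlower (u t)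
    _ ≤ b * ‖u 0‖ ^ 2 * Real.exp (-(2 * k / b) * t) / m := by
        gcongr; exact hgronwall.trans (by gcongr; exact hupper (u 0))
    _ = b / m * Real.exp (-(2 * k / b) * t) * ‖u 0‖ ^ 2 := by ring

end Lyapunov

section Compensator

variable {E : Type*} [NormedAddCommGroup E] [InnerProductSpace ℂ E]

/-- Quantitative form of the stability conditions (S) and (K) of Ueda, Duan and Kawashima for the
system `u' + iξ A u + L u = 0`: the symmetric operator `S` makes `‖L w‖` controllable although `L`
itself need not be symmetric, and the skew-adjoint operator `K`, a Kawashima compensating matrix,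
makes `‖w‖` controllable. Skew-adjointness of `K` is encoded as symmetry of `i K`, and the
conditions on kernels are replaced by the inequalities that they give in finite dimension. -/
structure IsCompensator (A L S K : E →L[ℂ] E) : Prop where
  isSymmetric_S : (S : E →ₗ[ℂ] E).IsSymmetric
  isSymmetric_I_smul_K : (Complex.I • K : E →ₗ[ℂ] E).IsSymmetric
  dissipative : ∀ w, 0 ≤ (⟪L w, w⟫_ℂ).re
  coercive_S : ∃ β > 0, ∃ Λ > 0, ∀ w,
    β * ‖L w‖ ^ 2 ≤ Λ * (⟪L w, w⟫_ℂ).re + (⟪S (L w), w⟫_ℂ).re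
  cross_le : ∃ M ≥ 0, ∀ w,
    (⟪Complex.I • S (A w), w⟫_ℂ).re ^ 2 ≤ M * ‖w‖ ^ 2 * (⟪L w, w⟫_ℂ).re
  coercive_K : ∃ θ > 0, ∃ N > 0, ∀ w,
    θ * ‖w‖ ^ 2 ≤ (⟪K (A w), w⟫_ℂ).re + N * ‖L w‖ ^ 2

/-- The operator `1 + r (S - s i K)`, whose quadratic form is the Lyapunov functional; the weights
`r` and `s` depend on the frequency. -/
def lyapunovOp (S K : E →L[ℂ] E) (r s : ℝ) : E →L[ℂ] E :=
  1 + (r : ℂ) • (S - (s : ℂ) • Complex.I • K)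

lemma isSymmetric_lyapunovOp {S K : E →L[ℂ] E} (hS : (S : E →ₗ[ℂ] E).IsSymmetric)
    (hK : (Complex.I • K : E →ₗ[ℂ] E).IsSymmetric) (r s : ℝ) :
    (lyapunovOp S K r s : E →ₗ[ℂ] E).IsSymmetric :=
  .add .one <| .smul (Complex.conj_ofReal _) <| .sub hS <| .smul (Complex.conj_ofReal _) hK

lemma norm_lyapunovOp_sub_one_le (S K : E →L[ℂ] E) {r s r₀ s₀ : ℝ} (hr : |r| ≤ r₀)
    (hs : |s| ≤ s₀) : ‖lyapunovOp S K r s - 1‖ ≤ r₀ * (‖S‖ + s₀ * ‖K‖) := by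
  have hr₀ : 0 ≤ r₀ := (abs_nonneg r).trans hr
  calc ‖lyapunovOp S K r s - 1‖ = |r| * ‖S - (s : ℂ) • Complex.I • K‖ := by
        rw [lyapunovOp, add_sub_cancel_left, norm_smul, Complex.norm_real, Real.norm_eq_abs]
    _ ≤ |r| * (‖S‖ + ‖(s : ℂ) • Complex.I • K‖) := by gcongr; exact norm_sub_le _ _
    _ = |r| * (‖S‖ + |s| * ‖K‖) := by
        rw [norm_smul, norm_smul, Complex.norm_I, one_mul, Complex.norm_real, Real.norm_eq_abs]
    _ ≤ r₀ * (‖S‖ + s₀ * ‖K‖) := by gcongr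

lemma abs_re_inner_I_smul_apply_le (K : E →L[ℂ] E) (x w : E) :
    |(⟪Complex.I • K x, w⟫_ℂ).re| ≤ ‖K‖ * ‖x‖ * ‖w‖ := by
  have hK : ‖Complex.I • K‖ = ‖K‖ := by rw [norm_smul, Complex.norm_I, one_mul]
  exact hK ▸ abs_re_inner_apply_le (Complex.I • K) x w

lemma re_inner_lyapunovOp_apply (S K : E →L[ℂ] E) (r s : ℝ) (x w : E) :
    (⟪lyapunovOp S K r s x, w⟫_ℂ).re =
      (⟪x, w⟫_ℂ).re + r * ((⟪S x, w⟫_ℂ).re - s * (⟪Complex.I • K x, w⟫_ℂ).re) := by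
  have h : lyapunovOp S K r s x = x + (r : ℂ) • (S x - (s : ℂ) • Complex.I • K x) := rfl
  rw [h, inner_add_left, inner_smul_left, inner_sub_left, inner_smul_left, Complex.conj_ofReal,
    Complex.conj_ofReal, Complex.add_re, Complex.re_ofReal_mul, Complex.sub_re,
    Complex.re_ofReal_mul]

lemma re_inner_lyapunovOp_generator {A : E →L[ℂ] E} (hA : (A : E →ₗ[ℂ] E).IsSymmetric)
    (L S K : E →L[ℂ] E) (r s ξ : ℝ) (w : E) :
    (⟪lyapunovOp S K r s (-((ξ * Complex.I) • A w) - L w), w⟫_ℂ).re =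
      -((⟪L w, w⟫_ℂ).re + r * (ξ * (⟪Complex.I • S (A w), w⟫_ℂ).re + (⟪S (L w), w⟫_ℂ).re)
        + r * s * (ξ * (⟪K (A w), w⟫_ℂ).re - (⟪Complex.I • K (L w), w⟫_ℂ).re)) := by
  have hA0 : (⟪Complex.I • A w, w⟫_ℂ).re = 0 := by
    have him : (⟪A w, w⟫_ℂ).im = 0 := hA.im_inner_apply_self w
    simp [him]
  have hKA : Complex.I • K ((ξ * Complex.I) • A w) = -((ξ : ℂ) • K (A w)) := by
    rw [map_smul, smul_smul, mul_left_comm, Complex.I_mul_I, mul_neg_one, neg_smul]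
  have hre (x : E) : (⟪(ξ : ℂ) • x, w⟫_ℂ).re = ξ * (⟪x, w⟫_ℂ).re := by
    rw [inner_smul_left, Complex.conj_ofReal, Complex.re_ofReal_mul]
  rw [re_inner_lyapunovOp_apply, map_sub, map_sub, map_neg, map_neg, smul_sub, smul_neg, hKA,
    map_smul]
  simp only [mul_smul, inner_sub_left, inner_neg_left, Complex.sub_re, Complex.neg_re, hre, hA0]
  ring

-- `D`, `X`, `Y`, `Z`, `W` stand for the real parts of `⟪L w, w⟫`, `⟪i S A w, w⟫`, `⟪S L w, w⟫`,
-- `⟪K A w, w⟫`, `⟪i K L w, w⟫`, and `l`, `n` for `‖L w‖`, `‖w‖`. The indefinite terms `X` and `W`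
-- are absorbed by AM-GM, each at the cost of a quarter of `κ θ (ξ p)² n²`.
lemma dissipation_lower_bound {ξ p κ δ β Λ M θ N r D X Y Z W l n : ℝ}
    (hp : 0 ≤ p) (hp1 : p ≤ 1) (hξp : ξ ^ 2 * p ≤ 1)
    (hκ : 0 < κ) (hδ : 0 < δ) (hΛ : 0 ≤ Λ) (hM : 0 ≤ M) (hθ : 0 < θ) (hN : 0 ≤ N)
    (hκβ : κ * (N + r ^ 2 / θ) ≤ β) (hδ1 : δ * (Λ + M / (κ * θ)) ≤ 1)
    (hD : 0 ≤ D) (hY : β * l ^ 2 ≤ Λ * D + Y) (hX : X ^ 2 ≤ M * n ^ 2 * D)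
    (hZ : θ * n ^ 2 ≤ Z + N * l ^ 2) (hW : |W| ≤ r * l * n) :
    κ * δ * θ / 2 * (ξ * p) ^ 2 * n ^ 2 ≤
      D + δ * p * (ξ * X + Y) + δ * p * (κ * (ξ * p)) * (ξ * Z - W) := by
  obtain ⟨q, hq⟩ : ∃ q, q = ξ * p := ⟨_, rfl⟩
  have hqp : q ^ 2 ≤ p := by rw [hq]; nlinarith
  have hpp : p ^ 2 ≤ p := by nlinarith
  have hqX : |q * X| ≤ κ * θ / 4 * (q ^ 2 * n ^ 2) + M / (κ * θ) * D := by
    refine abs_le_add_of_sq_le_four_mul (by positivity) (by positivity) ?_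
    calc (q * X) ^ 2 ≤ q ^ 2 * (M * n ^ 2 * D) := by rw [mul_pow]; gcongr
      _ = _ := by field_simp
  have hqW : |q * p * W| ≤ θ / 4 * (q ^ 2 * n ^ 2) + r ^ 2 / θ * (p * l ^ 2) := by
    refine abs_le_add_of_sq_le_four_mul (by positivity) (by positivity) ?_
    calc (q * p * W) ^ 2 = q ^ 2 * p ^ 2 * |W| ^ 2 := by rw [sq_abs]; ring
      _ ≤ q ^ 2 * p * (r * l * n) ^ 2 := by gcongr
      _ = _ := by field_simp
  have hY' : p * (β * l ^ 2) ≤ Λ * D + p * Y := by nlinarith [mul_nonneg hΛ hD]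
  have hZ' : θ * (q ^ 2 * n ^ 2) ≤ q ^ 2 * Z + N * (p * l ^ 2) := by
    have : q ^ 2 * (N * l ^ 2) ≤ p * (N * l ^ 2) := by gcongr
    nlinarith [mul_le_mul_of_nonneg_left hZ (sq_nonneg q)]
  have hl : κ * (N + r ^ 2 / θ) * (p * l ^ 2) ≤ β * (p * l ^ 2) := by gcongr
  have hbracket : κ * θ / 2 * (q ^ 2 * n ^ 2) - (Λ + M / (κ * θ)) * D ≤
      q * X + p * Y + κ * (q ^ 2 * Z - q * p * W) := by
    linarith [neg_le_of_abs_le hqX, mul_le_mul_of_nonneg_left hZ' hκ.le,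
      mul_le_mul_of_nonneg_left (le_of_abs_le hqW) hκ.le]
  calc κ * δ * θ / 2 * (ξ * p) ^ 2 * n ^ 2
      = δ * (κ * θ / 2 * (q ^ 2 * n ^ 2)) := by rw [hq]; ring
    _ ≤ D + δ * (κ * θ / 2 * (q ^ 2 * n ^ 2) - (Λ + M / (κ * θ)) * D) := by
        linarith [mul_le_of_le_one_left hD hδ1]
    _ ≤ D + δ * (q * X + p * Y + κ * (q ^ 2 * Z - q * p * W)) := by gcongr
    _ = _ := by rw [hq]; ring

theorem IsCompensator.exists_lyapunovOp {A L S K : E →L[ℂ] E}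
    (h : IsCompensator A L S K) (hA : (A : E →ₗ[ℂ] E).IsSymmetric) :
    ∃ k > 0, ∀ ξ : ℝ, ∃ H : E →L[ℂ] E, (H : E →ₗ[ℂ] E).IsSymmetric ∧ ‖H - 1‖ ≤ 1 / 2 ∧
      ∀ w, (⟪H (-((ξ * Complex.I) • A w) - L w), w⟫_ℂ).re ≤
        -(k * (ξ ^ 2 / (1 + ξ ^ 2) ^ 2)) * ‖w‖ ^ 2 := by
  obtain ⟨β, hβ, Λ, hΛ, hY⟩ := h.coercive_S
  obtain ⟨M, hM, hX⟩ := h.cross_le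
  obtain ⟨θ, hθ, N, hN, hZ⟩ := h.coercive_K
  let κ := β / (N + ‖K‖ ^ 2 / θ)
  have hκ : 0 < κ := by positivity
  let δ := 1 / (Λ + M / (κ * θ) + 2 * (‖S‖ + κ * ‖K‖))
  have hδ : 0 < δ := by positivity
  have hδsum : δ * (Λ + M / (κ * θ)) + δ * (2 * (‖S‖ + κ * ‖K‖)) = 1 := by
    rw [← mul_add]; exact one_div_mul_cancel (by positivity)
  refine ⟨κ * δ * θ / 2, by positivity, fun ξ => ?_⟩
  obtain ⟨p, hp⟩ : ∃ p, p = (1 + ξ ^ 2)⁻¹ := ⟨_, rfl⟩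
  have hp0 : 0 < p := by rw [hp]; positivity
  have hp_add : p + ξ ^ 2 * p = 1 := by rw [hp]; field_simp
  have hξp : 0 ≤ ξ ^ 2 * p := by positivity
  have hp1 : p ≤ 1 := by linarith
  refine ⟨lyapunovOp S K (δ * p) (κ * (ξ * p)),
    isSymmetric_lyapunovOp h.isSymmetric_S h.isSymmetric_I_smul_K _ _, ?_, fun w => ?_⟩
  · have hr : |δ * p| ≤ δ := by
      rw [abs_of_pos (by positivity)]; exact mul_le_of_le_one_right hδ.le hp1
    have hs : |κ * (ξ * p)| ≤ κ := by
      rw [abs_mul, abs_of_pos hκ]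
      exact mul_le_of_le_one_right hκ.le (by rw [← sq_le_one_iff_abs_le_one]; nlinarith)
    have : 0 ≤ δ * (Λ + M / (κ * θ)) := by positivity
    linarith [norm_lyapunovOp_sub_one_le S K hr hs]
  · have hη : ξ ^ 2 / (1 + ξ ^ 2) ^ 2 = (ξ * p) ^ 2 := by rw [hp]; field_simp
    have hκβ : κ * (N + ‖K‖ ^ 2 / θ) = β := div_mul_cancel₀ _ (by positivity)
    rw [re_inner_lyapunovOp_generator hA, hη, neg_mul, neg_le_neg_iff]
    refine dissipation_lower_bound hp0.le hp1 (by linarith) hκ hδ hΛ.le hM hθ hN.le hκβ.le ?_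
      (h.dissipative w) (hY w) (hX w) (hZ w)
      (abs_re_inner_I_smul_apply_le K (L w) w)
    have : 0 ≤ δ * (2 * (‖S‖ + κ * ‖K‖)) := by positivity
    linarith

theorem IsCompensator.exists_pointwise_decay {A L S K : E →L[ℂ] E}
    (h : IsCompensator A L S K) (hA : (A : E →ₗ[ℂ] E).IsSymmetric) :
    ∃ C > (0 : ℝ), ∃ c > (0 : ℝ), ∀ ξ : ℝ, ∀ u u' : ℝ → E,
      (∀ t : ℝ, 0 ≤ t → HasDerivWithinAt u (u' t) (Set.Ici 0) t) →
      (∀ t : ℝ, 0 ≤ t → u' t + (ξ * Complex.I) • A (u t) + L (u t) = 0) →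
      ∀ t : ℝ, 0 ≤ t →
        ‖u t‖ ≤ C * Real.exp (-(c * (ξ ^ 2 / (1 + ξ ^ 2) ^ 2) * t)) * ‖u 0‖ := by
  obtain ⟨k, hk, hH⟩ := h.exists_lyapunovOp hA
  refine ⟨√(3 / 2 / (1 / 2)), by positivity, k / (3 / 2), by positivity,
    fun ξ u u' hu hode t ht => ?_⟩
  obtain ⟨H, hHsymm, hHnorm, hHdiss⟩ := hH ξ
  have hquad (w : E) : |RCLike.re ⟪H w, w⟫_ℂ - ‖w‖ ^ 2| ≤ 1 / 2 * ‖w‖ ^ 2 :=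
    (abs_re_inner_apply_self_sub_norm_sq_le H w).trans (by gcongr)
  have hdiss (s : ℝ) (hs : 0 ≤ s) : (⟪H (u' s), u s⟫_ℂ).re ≤
      -(k * (ξ ^ 2 / (1 + ξ ^ 2) ^ 2)) * ‖u s‖ ^ 2 := by
    have hgen : u' s = -((ξ * Complex.I) • A (u s)) - L (u s) := by
      linear_combination (norm := module) hode s hs
    rw [hgen]
    exact hHdiss (u s)
  convert norm_le_of_lyapunov hHsymm (by norm_num : (0 : ℝ) < 1 / 2)
    (by norm_num : (0 : ℝ) < 3 / 2) (by positivity)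
    (fun w => by linarith [neg_le_of_abs_le (hquad w)])
    (fun w => by linarith [le_of_abs_le (hquad w)]) hu hdiss ht using 4
  ring

end Compensator

section Timoshenko

/-- The operator on the Hermitian space `ℂᵐ` defined by a real matrix; `EuclideanSpace` supplies the
norm `cnrm`, which the type `Fin m → ℂ` does not carry. -/
def cmapCLM {m : ℕ} (X : Matrix (Fin m) (Fin m) ℝ) :
    EuclideanSpace ℂ (Fin m) →L[ℂ] EuclideanSpace ℂ (Fin m) :=
  Matrix.toEuclideanCLM (𝕜 := ℂ) (cmap X)

lemma cnrm_eq_norm_toLp {m : ℕ} (z : Fin m → ℂ) : cnrm z = ‖WithLp.toLp 2 z‖ := by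
  simp [cnrm, EuclideanSpace.norm_eq, Complex.normSq_eq_norm_sq]

lemma isSymmetric_cmapCLM {m : ℕ} {X : Matrix (Fin m) (Fin m) ℝ} (hX : X.IsSymm) :
    (cmapCLM X : EuclideanSpace ℂ (Fin m) →ₗ[ℂ] _).IsSymmetric := by
  refine Matrix.isSymmetric_toEuclideanLin_iff.2 (Matrix.IsHermitian.ext fun i j => ?_)
  simp [cmap, hX.apply i j]

lemma isSymmetric_I_smul_cmapCLM {m : ℕ} {X : Matrix (Fin m) (Fin m) ℝ} (hX : Xᵀ = -X) :
    (Complex.I • cmapCLM X : EuclideanSpace ℂ (Fin m) →ₗ[ℂ] _).IsSymmetric := by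
  have hherm : (Complex.I • cmap X).IsHermitian := Matrix.IsHermitian.ext fun i j => by
    have hij : X j i = -X i j := congrFun₂ hX i j
    simp [cmap, hij]
  have := Matrix.isSymmetric_toEuclideanLin_iff.2 hherm
  rwa [map_smul] at this

/-- The matrix `S` of condition (S) for the Timoshenko system: `S L` recovers `w_x - ψ` from the
coupling entries of `L`, and the entries `a` cancel the cross term `i S A` when `a = 1`. -/
def TimS (a : ℝ) : Matrix (Fin 4) (Fin 4) ℝ :=
  -(!![0, 0, 0, 1; 0, 0, a, 0; 0, a, 0, 0; 1, 0, 0, 0])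

/-- The compensating matrix `K` of condition (K) for the Timoshenko system. -/
def TimK (a : ℝ) : Matrix (Fin 4) (Fin 4) ℝ :=
  !![0, 1, 0, 0; -1, 0, 0, 0; 0, 0, 0, -a; 0, 0, a, 0]

lemma isSymm_TimA (a : ℝ) : (TimA a).IsSymm := by
  ext i j; fin_cases i <;> fin_cases j <;> simp [TimA]

lemma isSymm_TimS (a : ℝ) : (TimS a).IsSymm := by
  ext i j; fin_cases i <;> fin_cases j <;> simp [TimS]

lemma transpose_TimK (a : ℝ) : (TimK a)ᵀ = -TimK a := by
  ext i j; fin_cases i <;> fin_cases j <;> simp [TimK]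

lemma forall_euclideanSpace_four {P : EuclideanSpace ℂ (Fin 4) → Prop} :
    (∀ w, P w) ↔ ∀ v u z y : ℂ, P !₂[v, u, z, y] := by
  refine ⟨fun h v u z y => h _, fun h w => ?_⟩
  have hw : !₂[w 0, w 1, w 2, w 3] = w := by ext i; fin_cases i <;> rfl
  exact hw ▸ h (w 0) (w 1) (w 2) (w 3)

variable (a γ : ℝ) (v u z y : ℂ)

lemma norm_sq_vec_four :
    ‖!₂[v, u, z, y]‖ ^ 2 = ‖v‖ ^ 2 + ‖u‖ ^ 2 + ‖z‖ ^ 2 + ‖y‖ ^ 2 := by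
  simp [EuclideanSpace.norm_sq_eq, Fin.sum_univ_four]

lemma re_inner_vec_four (v' u' z' y' : ℂ) :
    (⟪!₂[v', u', z', y'], !₂[v, u, z, y]⟫_ℂ).re =
      (v'.re * v.re + v'.im * v.im) + (u'.re * u.re + u'.im * u.im) +
        (z'.re * z.re + z'.im * z.im) + (y'.re * y.re + y'.im * y.im) := by
  simp [PiLp.inner_apply, Fin.sum_univ_four]
  ring

lemma cmapCLM_TimA_apply :
    cmapCLM (TimA a) !₂[v, u, z, y] = !₂[-u, -v, -(a * y), -(a * z)] := by
  ext i; fin_cases i <;> simp [cmapCLM, cmap, TimA, Matrix.mulVec, dotProduct, Fin.sum_univ_four]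

lemma cmapCLM_TimL_apply :
    cmapCLM (TimL γ) !₂[v, u, z, y] = !₂[y, 0, 0, γ * y - v] := by
  ext i; fin_cases i <;>
    simp [cmapCLM, cmap, TimL, Matrix.mulVec, dotProduct, Fin.sum_univ_four, neg_add_eq_sub]

lemma cmapCLM_TimS_apply :
    cmapCLM (TimS a) !₂[v, u, z, y] = !₂[-y, -(a * z), -(a * u), -v] := by
  ext i; fin_cases i <;> simp [cmapCLM, cmap, TimS, Matrix.mulVec, dotProduct, Fin.sum_univ_four]

lemma cmapCLM_TimK_apply :
    cmapCLM (TimK a) !₂[v, u, z, y] = !₂[u, -v, -(a * y), a * z] := by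
  ext i; fin_cases i <;> simp [cmapCLM, cmap, TimK, Matrix.mulVec, dotProduct, Fin.sum_univ_four]

lemma norm_sq_TimL :
    ‖cmapCLM (TimL γ) !₂[v, u, z, y]‖ ^ 2 = ‖y‖ ^ 2 + ‖γ * y - v‖ ^ 2 := by
  simp [cmapCLM_TimL_apply, norm_sq_vec_four]

lemma re_inner_TimL :
    (⟪cmapCLM (TimL γ) !₂[v, u, z, y], !₂[v, u, z, y]⟫_ℂ).re = γ * ‖y‖ ^ 2 := by
  rw [cmapCLM_TimL_apply, re_inner_vec_four]
  simp only [Complex.sq_norm, Complex.normSq_apply, Complex.sub_re, Complex.sub_im,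
    Complex.re_ofReal_mul, Complex.im_ofReal_mul, Complex.zero_re, Complex.zero_im]
  ring

lemma re_inner_TimS_TimL :
    (⟪cmapCLM (TimS a) (cmapCLM (TimL γ) !₂[v, u, z, y]), !₂[v, u, z, y]⟫_ℂ).re =
      (‖v‖ ^ 2 + ‖γ * y - v‖ ^ 2 - (2 + γ ^ 2) * ‖y‖ ^ 2) / 2 := by
  rw [cmapCLM_TimL_apply, cmapCLM_TimS_apply, re_inner_vec_four]
  simp only [Complex.sq_norm, Complex.normSq_apply, Complex.sub_re, Complex.sub_im,
    Complex.neg_re, Complex.neg_im, Complex.re_ofReal_mul, Complex.im_ofReal_mul,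
    Complex.zero_re, Complex.zero_im]
  ring

lemma re_inner_I_smul_TimS_TimA :
    (⟪Complex.I • cmapCLM (TimS a) (cmapCLM (TimA a) !₂[v, u, z, y]), !₂[v, u, z, y]⟫_ℂ).re =
      (1 - a ^ 2) * (⟪u, y⟫_ℂ).im := by
  rw [cmapCLM_TimA_apply, cmapCLM_TimS_apply, ← WithLp.toLp_smul]
  simp only [Matrix.smul_cons, Matrix.smul_empty, smul_eq_mul, re_inner_vec_four,
    RCLike.inner_apply, Complex.mul_im y, Complex.conj_re, Complex.conj_im, Complex.I_mul_re,
    Complex.I_mul_im, Complex.neg_re, Complex.neg_im, Complex.re_ofReal_mul, Complex.im_ofReal_mul]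
  ring

lemma re_inner_TimK_TimA :
    (⟪cmapCLM (TimK a) (cmapCLM (TimA a) !₂[v, u, z, y]), !₂[v, u, z, y]⟫_ℂ).re =
      ‖u‖ ^ 2 - ‖v‖ ^ 2 + a ^ 2 * (‖z‖ ^ 2 - ‖y‖ ^ 2) := by
  rw [cmapCLM_TimA_apply, cmapCLM_TimK_apply, re_inner_vec_four]
  simp only [Complex.sq_norm, Complex.normSq_apply, Complex.neg_re, Complex.neg_im,
    Complex.re_ofReal_mul, Complex.im_ofReal_mul]
  ring

lemma norm_sq_TimL_le {γ : ℝ} (hγ : γ ≠ 0) :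
    1 / 2 * ‖cmapCLM (TimL γ) !₂[v, u, z, y]‖ ^ 2 ≤
      (3 + γ ^ 2) / (2 * γ) * (⟪cmapCLM (TimL γ) !₂[v, u, z, y], !₂[v, u, z, y]⟫_ℂ).re +
        (⟪cmapCLM (TimS a) (cmapCLM (TimL γ) !₂[v, u, z, y]), !₂[v, u, z, y]⟫_ℂ).re := by
  have hcancel : (3 + γ ^ 2) / (2 * γ) * (γ * ‖y‖ ^ 2) = (3 + γ ^ 2) / 2 * ‖y‖ ^ 2 := by
    field_simp
  rw [norm_sq_TimL, re_inner_TimL, re_inner_TimS_TimL, hcancel]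
  linarith [sq_nonneg ‖v‖]

lemma sq_re_inner_I_smul_TimS_TimA_le {γ : ℝ} (hγ : γ ≠ 0) :
    (⟪Complex.I • cmapCLM (TimS a) (cmapCLM (TimA a) !₂[v, u, z, y]), !₂[v, u, z, y]⟫_ℂ).re ^ 2 ≤
      (1 - a ^ 2) ^ 2 / γ * ‖!₂[v, u, z, y]‖ ^ 2 *
        (⟪cmapCLM (TimL γ) !₂[v, u, z, y], !₂[v, u, z, y]⟫_ℂ).re := by
  have him : |(⟪u, y⟫_ℂ).im| ≤ ‖u‖ * ‖y‖ :=
    (Complex.abs_im_le_norm _).trans (norm_inner_le_norm _ _)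
  have hu : ‖u‖ ≤ ‖!₂[v, u, z, y]‖ := PiLp.norm_apply_le !₂[v, u, z, y] 1
  rw [re_inner_I_smul_TimS_TimA, re_inner_TimL, mul_pow, ← sq_abs (Complex.im _)]
  calc (1 - a ^ 2) ^ 2 * |(⟪u, y⟫_ℂ).im| ^ 2
      ≤ (1 - a ^ 2) ^ 2 * (‖!₂[v, u, z, y]‖ * ‖y‖) ^ 2 := by gcongr; exact him.trans (by gcongr)
    _ = (1 - a ^ 2) ^ 2 / γ * ‖!₂[v, u, z, y]‖ ^ 2 * (γ * ‖y‖ ^ 2) := by field_simp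

lemma min_one_sq_mul_norm_sq_le :
    min 1 (a ^ 2) * ‖!₂[v, u, z, y]‖ ^ 2 ≤
      (⟪cmapCLM (TimK a) (cmapCLM (TimA a) !₂[v, u, z, y]), !₂[v, u, z, y]⟫_ℂ).re +
        (4 + 4 * γ ^ 2 + 2 * a ^ 2) * ‖cmapCLM (TimL γ) !₂[v, u, z, y]‖ ^ 2 := by
  have hle_one (x : ℂ) : min 1 (a ^ 2) * ‖x‖ ^ 2 ≤ 1 * ‖x‖ ^ 2 := by
    gcongr; exact min_le_left _ _
  have hle_sq (x : ℂ) : min 1 (a ^ 2) * ‖x‖ ^ 2 ≤ a ^ 2 * ‖x‖ ^ 2 := by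
    gcongr; exact min_le_right _ _
  have hv : ‖v‖ ^ 2 ≤ 2 * (γ ^ 2 * ‖y‖ ^ 2 + ‖γ * y - v‖ ^ 2) :=
    calc ‖v‖ ^ 2 ≤ (|γ| * ‖y‖ + ‖γ * y - v‖) ^ 2 := by
          gcongr; simpa using norm_sub_le (γ * y : ℂ) (γ * y - v)
      _ ≤ 2 * ((|γ| * ‖y‖) ^ 2 + ‖γ * y - v‖ ^ 2) := add_sq_le
      _ = 2 * (γ ^ 2 * ‖y‖ ^ 2 + ‖γ * y - v‖ ^ 2) := by rw [mul_pow, sq_abs]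
  have hslack : 0 ≤ 4 * ‖y‖ ^ 2 + (4 * γ ^ 2 + 2 * a ^ 2) * ‖γ * y - v‖ ^ 2 := by positivity
  rw [norm_sq_TimL, re_inner_TimK_TimA, norm_sq_vec_four]
  linarith [hle_one v, hle_one u, hle_sq z, hle_sq y]

theorem isCompensator_TimS_TimK {a γ : ℝ} (ha : a ≠ 0) (hγ : 0 < γ) :
    IsCompensator (cmapCLM (TimA a)) (cmapCLM (TimL γ)) (cmapCLM (TimS a)) (cmapCLM (TimK a)) where
  isSymmetric_S := isSymmetric_cmapCLM (isSymm_TimS a)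
  isSymmetric_I_smul_K := isSymmetric_I_smul_cmapCLM (transpose_TimK a)
  dissipative := forall_euclideanSpace_four.2 fun v u z y => by
    rw [re_inner_TimL]; positivity
  coercive_S := ⟨1 / 2, by norm_num, (3 + γ ^ 2) / (2 * γ), by positivity,
    forall_euclideanSpace_four.2 fun v u z y => norm_sq_TimL_le a v u z y hγ.ne'⟩
  cross_le := ⟨(1 - a ^ 2) ^ 2 / γ, by positivity,
    forall_euclideanSpace_four.2 fun v u z y => sq_re_inner_I_smul_TimS_TimA_le a v u z y hγ.ne'⟩
  coercive_K := ⟨min 1 (a ^ 2), by positivity, 4 + 4 * γ ^ 2 + 2 * a ^ 2, by positivity,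
    forall_euclideanSpace_four.2 fun v u z y => min_one_sq_mul_norm_sq_le a γ v u z y⟩

end Timoshenko

theorem IsCompensator.exists_cnrm_le {m : ℕ} {A L S K : Matrix (Fin m) (Fin m) ℝ}
    (h : IsCompensator (cmapCLM A) (cmapCLM L) (cmapCLM S) (cmapCLM K)) (hA : A.IsSymm) :
    ∃ C > (0 : ℝ), ∃ c > (0 : ℝ), ∀ ξ : ℝ, ∀ u u' : ℝ → (Fin m → ℂ),
      (∀ t : ℝ, 0 ≤ t → HasDerivWithinAt u (u' t) (Set.Ici 0) t) →
      (∀ t : ℝ, 0 ≤ t →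
        u' t + ((ξ : ℂ) * Complex.I) • (cmap A).mulVec (u t) + (cmap L).mulVec (u t) = 0) →
      ∀ t : ℝ, 0 ≤ t →
        cnrm (u t) ≤ C * Real.exp (-(c * (ξ ^ 2 / (1 + ξ ^ 2) ^ 2) * t)) * cnrm (u 0) := by
  obtain ⟨C, hC, c, hc, hdecay⟩ := h.exists_pointwise_decay (isSymmetric_cmapCLM hA)
  refine ⟨C, hC, c, hc, fun ξ u u' hu hode t ht => ?_⟩
  rw [cnrm_eq_norm_toLp, cnrm_eq_norm_toLp]
  exact hdecay ξ (fun s => WithLp.toLp 2 (u s)) (fun s => WithLp.toLp 2 (u' s))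
    (fun s hs => (PiLp.continuousLinearEquiv 2 ℝ fun _ : Fin m => ℂ).symm.hasFDerivAt
      |>.comp_hasDerivWithinAt s (hu s hs))
    (fun s hs => congrArg (WithLp.toLp 2) (hode s hs)) t ht

theorem timoshenko_pointwise_decay_general
    (a γ : ℝ) (ha : a ≠ 0) (hγ : 0 < γ) :
    ∃ C > (0:ℝ), ∃ c > (0:ℝ), ∀ ξ : ℝ,
      ∀ u u' : ℝ → (Fin 4 → ℂ),
      (∀ t : ℝ, 0 ≤ t → HasDerivWithinAt u (u' t) (Set.Ici 0) t) →
      (∀ t : ℝ, 0 ≤ t →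
        u' t + ((ξ : ℂ) * Complex.I) • (cmap (TimA a)).mulVec (u t)
          + (cmap (TimL γ)).mulVec (u t) = 0) →
      ∀ t : ℝ, 0 ≤ t →
        cnrm (u t) ≤ C * Real.exp (-(c * (ξ ^ 2 / (1 + ξ ^ 2) ^ 2) * t)) * cnrm (u 0) :=
  (isCompensator_TimS_TimK ha hγ).exists_cnrm_le (isSymm_TimA a)

/-- **Theorem 6.1 (decay for the Timoshenko system, `a > 0`).**
Solutions of `û′ + iξA û + L û = 0` satisfy `|û(t)| ≤ C e^{−c η(ξ) t}|û(0)|`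
with `η(ξ) = ξ²/(1+ξ²)²`. -/
theorem timoshenko_pointwise_decay
    (a γ : ℝ) (ha : 0 < a) (hγ : 0 < γ) :
    ∃ C > (0:ℝ), ∃ c > (0:ℝ), ∀ ξ : ℝ,
      ∀ u u' : ℝ → (Fin 4 → ℂ),
      (∀ t : ℝ, 0 ≤ t → HasDerivWithinAt u (u' t) (Set.Ici 0) t) →
      (∀ t : ℝ, 0 ≤ t →
        u' t + ((ξ : ℂ) * Complex.I) • (cmap (TimA a)).mulVec (u t)
          + (cmap (TimL γ)).mulVec (u t) = 0) →
      ∀ t : ℝ, 0 ≤ t →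
        cnrm (u t) ≤ C * Real.exp (-(c * (ξ ^ 2 / (1 + ξ ^ 2) ^ 2) * t)) * cnrm (u 0) :=
  timoshenko_pointwise_decay_general a γ ha.ne' hγ
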